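/- arXiv:1702.01218 — 5 statements merged into one kernel-verified Lean document; each statement's English description precedes it below -/
import Mathlib

section
/- (Proposition 1, second part, rigorous form.) Fix q_1,…,q_4 ≥ 0 with Σ_i q_i = 1, ζ_1,…,ζ_4 > 0, σ_h² > 0 and κ > 0. Let (S_l)_{l≥1} be i.i.d. with P(S_l = i) = q_i, and let (Z_l)_{l≥1} be i.i.d. exponential with mean σ_h², with the two sequences independent. Define the accumulated SNR Γ_m = Σ_{l=1}^m ζ_{S_l} Z_l, and for nonnegative integers m_1, m_2, m_3, m_4 define F(κ; m_1,m_2,m_3,m_4) = P(Σ_{i=1}^4 ζ_i (X_{i,1} + ⋯ + X_{i,m_i}) ≤ κ), where all X_{i,j} are independent exponential random variables with mean σ_h². Then for every m ≥ 1 with P(Γ_m < κ) > 0, the conditional decoding-failure probability under HARQ chase combining satisfies p_m = P(Γ_{m+1} < κ | Γ_m < κ) = [ Σ_{m_1+m_2+m_3+m_4=m} (m!/(m_1! m_2! m_3! m_4!)) (∏_i q_i^{m_i}) Σ_{i=1}^4 q_i F(κ; m_1,…,m_i+1,…,m_4) ] / [ Σ_{m_1+m_2+m_3+m_4=m} (m!/(m_1!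 m_2! m_3! m_4!)) (∏_i q_i^{m_i}) F(κ; m_1,m_2,m_3,m_4) ]. -/
open MeasureTheory ProbabilityTheory Real Finset

/-- `F(κ; m₁,m₂,m₃,m₄)`: the probability that `∑ᵢ ζᵢ (Xᵢ,₁ + ⋯ + Xᵢ,ₘᵢ) ≤ κ`, where all
`Xᵢ,ⱼ` are independent exponential random variables with mean `σ_h²`. -/
noncomputable def Fcc (σh2 κ : ℝ) (ζ : Fin 4 → ℝ) (v : Fin 4 → ℕ) : ℝ :=
  ((Measure.pi fun i : Fin 4 => Measure.pi fun _ : Fin (v i) => expMeasure (1 / σh2))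
    {x | ∑ i, ζ i * ∑ j, x i j ≤ κ}).toReal

lemma prod_mono {ι : Type*} (t : Finset ι) (g : ι → Fin 4 →₀ ℕ) (a : ι → ℝ) :
    ∏ i ∈ t, MvPolynomial.monomial (g i) (a i) =
      MvPolynomial.monomial (∑ i ∈ t, g i) (∏ i ∈ t, a i) := by
  classical
  induction t using Finset.induction_on with
  | empty => simp
  | insert i t hi ih => rw [prod_insert hi, sum_insert hi, prod_insert hi, ih,
      MvPolynomial.monomial_mul]

lemma multi_sum (q : Fin 4 → ℝ) (m : ℕ) (f : (Fin 4 → ℕ) → ℝ) :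
    ∑ s : Fin m → Fin 4, (∏ l, q (s l)) * f (fun i => Fintype.card {l // s l = i}) =
    ∑ v ∈ Finset.Nat.antidiagonalTuple 4 m,
      (Nat.multinomial Finset.univ v : ℝ) * (∏ i, q i ^ v i) * f v := by
  have h1 := Fintype.sum_pow (fun i => MvPolynomial.monomial (Finsupp.single i 1) (q i)) m
  have h2 := Finset.sum_pow_eq_sum_piAntidiag (univ : Finset (Fin 4)) (fun i => MvPolynomial.monomial (Finsupp.single i 1) (q i)) m
  rw [h1, piAntidiag_univ_fin_eq_antidiagonalTuple] at h2
  let L : MvPolynomial (Fin 4) ℝ →ₗ[ℝ] ℝ := (MvPolynomial.basisMonomials (Fin 4) ℝ).constr ℝ (fun v => f v)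
  have hL : ∀ v a, L (MvPolynomial.monomial v a) = a * f v := by
    intro v a
    have : MvPolynomial.monomial v a = a • MvPolynomial.basisMonomials (Fin 4) ℝ v := by
      simp [MvPolynomial.smul_monomial]
    rw [this, map_smul, Module.Basis.constr_basis, smul_eq_mul]
  have h3 := congrArg L h2
  rw [map_sum, map_sum] at h3
  convert h3 using 2 with s _ v hv
  · rw [prod_mono, hL]
    congr 2
    funext i
    simp [Finsupp.finset_sum_apply, Finsupp.single_apply, Fintype.card_subtype]
  · have : (Nat.multinomial univ v : MvPolynomial (Fin 4) ℝ) =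
        MvPolynomial.monomial 0 (Nat.multinomial univ v : ℝ) := by
      rw [← MvPolynomial.C_apply]; simp
    simp only [MvPolynomial.monomial_pow]
    rw [prod_mono, this, MvPolynomial.monomial_mul, hL]
    congr 2
    funext i
    simp [Finsupp.finset_sum_apply, Finsupp.single_apply]

lemma law_pi {Ω : Type*} [MeasurableSpace Ω] {P : Measure Ω} [IsProbabilityMeasure P]
    {ν : Measure ℝ} [IsProbabilityMeasure ν] {ι : Type*} {Z : ι → Ω → ℝ} (hZmeas : ∀ l, Measurable (Z l))
    (hZindep : iIndepFun Z P) (hZlaw : ∀ l, Measure.map (Z l) P = ν) (v : Fin 4 → ℕ)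
    (e : (Σ i, Fin (v i)) → ι) (he : e.Injective) :
    P.map (fun ω i j => Z (e ⟨i, j⟩) ω) = Measure.pi fun i : Fin 4 => Measure.pi fun _ : Fin (v i) => ν := by
  have h := (hZindep.precomp he).map_fun_eq_pi_map (fun i => (hZmeas _).aemeasurable)
  have h2 := Measure.infinitePi_map_piCurry (fun (i : Fin 4) (_ : Fin (v i)) => ν)
  simp only [Measure.infinitePi_eq_pi] at h2
  rw [← h2]
  simp only [hZlaw] at h
  rw [← h, Measure.map_map (by fun_prop) (by fun_prop)]
  rfl

lemma exists_e {n : ℕ} (s : Fin n → Fin 4) :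
    ∃ e : (Σ i, Fin (Fintype.card {l // s l = i})) ≃ Fin n, ∀ p, s (e p) = p.1 :=
  ⟨(Equiv.sigmaCongrRight fun i => (Fintype.equivFin {l // s l = i}).symm).trans
    (Equiv.sigmaFiberEquiv s), fun p => ((Fintype.equivFin {l // s l = p.1}).symm p.2).2⟩

lemma exp_noatoms (r : ℝ) : NullSingletonClass (expMeasure r) := by
  unfold expMeasure gammaMeasure; infer_instance

lemma exp_nonneg_ae (r : ℝ) : ∀ᵐ x ∂(expMeasure r), 0 ≤ x := by
  rw [ae_iff]
  unfold expMeasure gammaMeasure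
  simp only [not_le]
  change (volume.withDensity (gammaPDF 1 r)) (Set.Iio 0) = 0
  rw [withDensity_apply _ measurableSet_Iio]
  exact lintegral_gammaPDF_of_nonpos le_rfl

lemma null_eq {Ω : Type*} [MeasurableSpace Ω] {P : Measure Ω} [IsProbabilityMeasure P]
    {X Y : Ω → ℝ} (hX : Measurable X) (hY : Measurable Y) (h : IndepFun X Y P) [NullSingletonClass (P.map X)]
    (c κ : ℝ) (hc : 0 < c) : P {ω | c * X ω + Y ω = κ} = 0 := by
  have := Measure.isProbabilityMeasure_map hX.aemeasurable (μ := P)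
  have := Measure.isProbabilityMeasure_map hY.aemeasurable (μ := P)
  have h1 := (indepFun_iff_map_prod_eq_prod_map_map hX.aemeasurable hY.aemeasurable).1 h
  have hm : MeasurableSet {p : ℝ × ℝ | c * p.1 + p.2 = κ} :=
    measurableSet_eq_fun (by fun_prop) (by fun_prop)
  have h2 : P {ω | c * X ω + Y ω = κ} = P.map (fun ω => (X ω, Y ω)) {p : ℝ × ℝ | c * p.1 + p.2 = κ} := by
    rw [Measure.map_apply (by fun_prop) hm]; rfl
  rw [h2, h1, Measure.prod_apply_symm hm]
  simp only [lintegral_eq_zero_iff' (measurable_measure_prodMk_right hm).aemeasurable]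
  refine Filter.Eventually.of_forall fun y => ?_
  have : (fun x => (x, y)) ⁻¹' {p : ℝ × ℝ | c * p.1 + p.2 = κ} = {(κ - y) / c} := by
    ext x; simp only [Set.mem_preimage, Set.mem_setOf_eq, Set.mem_singleton_iff]
    rw [eq_div_iff hc.ne']; constructor <;> intro h <;> linarith
  simp [this]

lemma fcc_eq {Ω : Type*} [MeasurableSpace Ω] {P : Measure Ω} [IsProbabilityMeasure P]
    (ζ : Fin 4 → ℝ) (hζ : ∀ i, 0 < ζ i) (σh2 κ : ℝ) (hσ : 0 < σh2)
    (Z : ℕ → Ω → ℝ) (hZmeas : ∀ l, Measurable (Z l)) (hZindep : iIndepFun Z P)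
    (hZlaw : ∀ l, Measure.map (Z l) P = expMeasure (1 / σh2))
    (n : ℕ) (s : Fin (n + 1) → Fin 4) :
    P {ω | ∑ l, ζ (s l) * Z l ω < κ} =
      ENNReal.ofReal (Fcc σh2 κ ζ (fun i => Fintype.card {l // s l = i})) := by
  have := isProbabilityMeasure_expMeasure (one_div_pos.2 hσ)
  obtain ⟨e, he⟩ := exists_e s
  have hlaw := law_pi hZmeas hZindep hZlaw _ (fun p => (e p : ℕ))
    (Fin.val_injective.comp e.injective)
  have hsum : ∀ ω, ∑ i, ζ i * ∑ j, Z (e ⟨i, j⟩) ω = ∑ l, ζ (s l) * Z l ω := by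
    intro ω
    rw [← e.sum_comp, Fintype.sum_sigma]
    simp only [he, Finset.mul_sum]
  have hnull : P {ω | ∑ l, ζ (s l) * Z l ω = κ} = 0 := by
    have := exp_noatoms (1 / σh2)
    have : NullSingletonClass (P.map (Z 0)) := by rw [hZlaw]; infer_instance
    have hi : IndepFun (Z 0) (fun ω => ∑ l : Fin n, ζ (s l.succ) * Z (l.succ : Fin (n+1)) ω) P := by
      have h0 := hZindep.indepFun_finset {0} (Finset.Icc 1 n) (by simp) hZmeas
      have hmem : ∀ l : Fin n, ((l.succ : Fin (n+1)) : ℕ) ∈ Finset.Icc 1 n := by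
        intro l; simp
      let φ : (({0} : Finset ℕ) → ℝ) → ℝ := fun x => x ⟨0, Finset.mem_singleton_self 0⟩
      let ψ : ((Finset.Icc 1 n) → ℝ) → ℝ := fun x =>
        ∑ l : Fin n, ζ (s l.succ) * x ⟨((l.succ : Fin (n+1)) : ℕ), hmem l⟩
      have hφ : Measurable φ := by fun_prop
      have hψ : Measurable ψ := by fun_prop
      exact h0.comp hφ hψ
    have := null_eq (hZmeas 0) (by fun_prop) hi (ζ (s 0)) κ (hζ _)
    simpa only [Fin.sum_univ_succ, Fin.val_zero] using this
  unfold Fcc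
  rw [ENNReal.ofReal_toReal (measure_ne_top _ _), ← hlaw, Measure.map_apply (by fun_prop)
    (measurableSet_le (by fun_prop) (by fun_prop))]
  simp only [Set.preimage_setOf_eq, hsum]
  refine measure_congr ?_
  have h2 : ∀ᵐ ω ∂P, ∑ l, ζ (s l) * Z l ω ≠ κ := by rw [ae_iff]; simpa using hnull
  filter_upwards [h2] with ω hω
  exact propext (lt_iff_le_and_ne.trans (and_iff_left hω))

lemma prob_eq {Ω : Type*} [MeasurableSpace Ω] {P : Measure Ω} [IsProbabilityMeasure P]
    (q : Fin 4 → ℝ) (hq : ∀ i, 0 ≤ q i)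
    (ζ : Fin 4 → ℝ) (hζ : ∀ i, 0 < ζ i) (σh2 κ : ℝ) (hσ : 0 < σh2)
    (S : ℕ → Ω → Fin 4) (hSmeas : ∀ l, Measurable (S l))
    (hSindep : iIndepFun S P)
    (hSlaw : ∀ l i, P {ω | S l ω = i} = ENNReal.ofReal (q i))
    (Z : ℕ → Ω → ℝ) (hZmeas : ∀ l, Measurable (Z l)) (hZindep : iIndepFun Z P)
    (hZlaw : ∀ l, Measure.map (Z l) P = expMeasure (1 / σh2))
    (hSZindep : IndepFun (fun ω l => S l ω) (fun ω l => Z l ω) P)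
    (n : ℕ) :
    P {ω | ∑ l ∈ Finset.range (n + 1), ζ (S l ω) * Z l ω < κ} =
      ENNReal.ofReal (∑ s : Fin (n + 1) → Fin 4, (∏ l, q (s l)) *
        Fcc σh2 κ ζ (fun i => Fintype.card {l // s l = i})) := by
  have hF : ∀ v, 0 ≤ Fcc σh2 κ ζ v := fun v => ENNReal.toReal_nonneg
  have hset : {ω | ∑ l ∈ Finset.range (n + 1), ζ (S l ω) * Z l ω < κ} =
      ⋃ s : Fin (n + 1) → Fin 4, ((fun ω l => S l ω) ⁻¹' {x | ∀ l : Fin (n+1), x l = s l}) ∩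
        ((fun ω l => Z l ω) ⁻¹' {x : ℕ → ℝ | ∑ l : Fin (n+1), ζ (s l) * x l < κ}) := by
    ext ω
    simp only [Finset.sum_range, Set.mem_setOf_eq, Set.mem_iUnion, Set.mem_inter_iff,
      Set.mem_preimage]
    constructor
    · intro h
      exact ⟨fun l => S l ω, fun l => rfl, h⟩
    · rintro ⟨s, h1, h2⟩
      simpa only [h1] using h2
  have hm1 : ∀ s : Fin (n + 1) → Fin 4,
      MeasurableSet {x : ℕ → Fin 4 | ∀ l : Fin (n+1), x l = s l} := by
    intro s
    rw [Set.setOf_forall]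
    exact MeasurableSet.iInter fun l => measurableSet_eq_fun (by fun_prop) (by fun_prop)
  have hm2 : ∀ s : Fin (n + 1) → Fin 4,
      MeasurableSet {x : ℕ → ℝ | ∑ l : Fin (n+1), ζ (s l) * x l < κ} := fun s =>
    measurableSet_lt (by fun_prop) (by fun_prop)
  rw [hset, measure_iUnion, tsum_fintype, ENNReal.ofReal_sum_of_nonneg]
  · refine Finset.sum_congr rfl fun s _ => ?_
    rw [hSZindep.measure_inter_preimage_eq_mul _ _ (hm1 s) (hm2 s),
      ENNReal.ofReal_mul (prod_nonneg fun _ _ => hq _),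
      ← fcc_eq ζ hζ σh2 κ hσ Z hZmeas hZindep hZlaw n s]
    congr 1
    have := (hSindep.precomp (g := fun l : Fin (n + 1) => (l : ℕ)) Fin.val_injective).measure_inter_preimage_eq_mul
      univ (sets := fun l : Fin (n + 1) => ({s l} : Set (Fin 4)))
      (fun _ _ => measurableSet_singleton _)
    rw [ENNReal.ofReal_prod_of_nonneg fun _ _ => hq _]
    rw [Finset.prod_congr rfl fun (l : Fin (n + 1)) _ => (hSlaw (l : ℕ) (s l)).symm]
    convert this using 2
    · ext ω; simp
    · rfl
  · exact fun s _ => mul_nonneg (prod_nonneg fun _ _ => hq _) (hF _)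
  · intro s t hst
    refine Set.disjoint_left.2 fun ω h1 h2 => hst ?_
    funext l
    exact (h1.1 l).symm.trans (h2.1 l)
  · exact fun s => ((measurable_pi_lambda _ hSmeas) (hm1 s)).inter
      ((measurable_pi_lambda _ hZmeas) (hm2 s))

lemma snoc_sum (q : Fin 4 → ℝ) (m : ℕ) (f : (Fin 4 → ℕ) → ℝ) :
    ∑ s : Fin (m + 1) → Fin 4, (∏ l, q (s l)) * f (fun i => Fintype.card {l // s l = i}) =
    ∑ s : Fin m → Fin 4, (∏ l, q (s l)) *
      ∑ i, q i * f ((fun i => Fintype.card {l // s l = i}) + Pi.single i 1) := by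
  rw [← (Fin.consEquiv (fun _ => Fin 4)).sum_comp, Fintype.sum_prod_type, Finset.sum_comm]
  refine Finset.sum_congr rfl fun s _ => ?_
  rw [Finset.mul_sum]
  refine Finset.sum_congr rfl fun i _ => ?_
  simp only [Fin.consEquiv_apply, Fin.prod_univ_succ, Fin.cons_zero, Fin.cons_succ]
  have : (fun j => Fintype.card {l : Fin (m+1) // (Fin.cons i s : Fin (m+1) → Fin 4) l = j}) =
      (fun i => Fintype.card {l // s l = i}) + Pi.single i 1 := by
    funext j
    simp only [Fintype.card_subtype, Finset.card_filter, Fin.sum_univ_succ, Fin.cons_zero,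
      Fin.cons_succ, Pi.add_apply, Pi.single_apply, eq_comm (a := j)]
    ring
  rw [this]; ring

lemma comb (q : Fin 4 → ℝ) (m : ℕ) (F : (Fin 4 → ℕ) → ℝ)  :
    ∑ s : Fin (m + 1) → Fin 4, (∏ l, q (s l)) * F (fun i => Fintype.card {l // s l = i}) =
    ∑ v ∈ Finset.Nat.antidiagonalTuple 4 m,
      (Nat.multinomial Finset.univ v : ℝ) * (∏ i, q i ^ v i) *
       ∑ i, q i * F (v + Pi.single i 1) := by
  have e2 :=    (multi_sum q m (fun v => ∑ i, q i * F (v + Pi.single i 1)))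
  rw [snoc_sum]
  rw [← e2]

/-- Proposition 1, second part (rigorous form): under HARQ chase combining, with i.i.d.
scenarios `S_l` (values in `{1,2,3,4}` with probabilities `qᵢ`), i.i.d. exponential fading
powers `Z_l` of mean `σ_h²` independent of the scenarios, and accumulated SNR
`Γ_m = ∑_{l<m} ζ_{S_l} Z_l`, the conditional decoding-failure probability
`p_m = P(Γ_{m+1} < κ | Γ_m < κ)` is the stated ratio of multinomial sums of `F`. -/
theorem stmt5
    {Ω : Type*} [MeasureSpace Ω] [IsProbabilityMeasure (ℙ : Measure Ω)]
    (q : Fin 4 → ℝ) (hq : ∀ i, 0 ≤ q i) (hqsum : ∑ i, q i = 1)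
    (ζ : Fin 4 → ℝ) (hζ : ∀ i, 0 < ζ i)
    (σh2 κ : ℝ) (hσ : 0 < σh2) (hκ : 0 < κ)
    (S : ℕ → Ω → Fin 4) (hSmeas : ∀ l, Measurable (S l))
    (hSindep : iIndepFun S ℙ)
    (hSlaw : ∀ l i, ℙ {ω | S l ω = i} = ENNReal.ofReal (q i))
    (Z : ℕ → Ω → ℝ) (hZmeas : ∀ l, Measurable (Z l))
    (hZindep : iIndepFun Z ℙ)
    (hZlaw : ∀ l, Measure.map (Z l) ℙ = expMeasure (1 / σh2))
    (hSZindep : IndepFun (fun ω l => S l ω) (fun ω l => Z l ω) ℙ)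
    (Γ : ℕ → Ω → ℝ) (hΓ : ∀ m ω, Γ m ω = ∑ l ∈ Finset.range m, ζ (S l ω) * Z l ω)
    (m : ℕ) (hm : 1 ≤ m)
    (hpos : 0 < ℙ {ω | Γ m ω < κ}) :
    ℙ[{ω | Γ (m + 1) ω < κ} | {ω | Γ m ω < κ}] =
      ENNReal.ofReal
        ((∑ v ∈ Finset.Nat.antidiagonalTuple 4 m,
            (Nat.multinomial Finset.univ v : ℝ) * (∏ i, q i ^ v i) *
              ∑ i, q i * Fcc σh2 κ ζ (v + Pi.single i 1)) /
          (∑ v ∈ Finset.Nat.antidiagonalTuple 4 m,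
            (Nat.multinomial Finset.univ v : ℝ) * (∏ i, q i ^ v i) * Fcc σh2 κ ζ v)) := by
  obtain ⟨k, rfl⟩ : ∃ k, m = k + 1 := ⟨m - 1, by omega⟩
  have hP := prob_eq q hq ζ hζ σh2 κ hσ S hSmeas hSindep hSlaw Z hZmeas hZindep hZlaw hSZindep
  simp only [← hΓ] at hP
  have hΓm : ∀ m, Measurable (Γ m) := by
    intro m
    have : Γ m = fun ω => ∑ l ∈ Finset.range m, ζ (S l ω) * Z l ω := funext (hΓ m)
    rw [this]
    have h1 : ∀ l, Measurable fun ω => ζ (S l ω) := fun l =>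
      (measurable_of_countable ζ).comp (hSmeas l)
    fun_prop
  rw [cond_apply (measurableSet_lt (hΓm _) measurable_const)]
  have hinter : ℙ ({ω | Γ (k + 1) ω < κ} ∩ {ω | Γ (k + 1 + 1) ω < κ}) =
      ℙ {ω | Γ (k + 1 + 1) ω < κ} := by
    refine measure_congr ?_
    have hZ : ∀ᵐ ω ∂(ℙ : Measure Ω), 0 ≤ Z (k + 1) ω := by
      refine ae_of_ae_map (hZmeas (k + 1)).aemeasurable ?_
      rw [hZlaw]; exact exp_nonneg_ae _
    filter_upwards [hZ] with ω hω
    refine propext (and_iff_right_of_imp fun h => ?_)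
    have h' : Γ (k + 1 + 1) ω < κ := h
    rw [hΓ, Finset.sum_range_succ, ← hΓ] at h'
    have := mul_nonneg (hζ (S (k+1) ω)).le hω
    change Γ (k + 1) ω < κ
    linarith
  have e1 := comb q (k+1) (Fcc σh2 κ ζ)
  have e2 := multi_sum q (k+1) (Fcc σh2 κ ζ)
  have h1 := hP (k + 1)
  have h2 := hP k
  rw [e1] at h1
  rw [e2] at h2
  rw [h2] at hpos
  rw [hinter, h1, h2]
  rw [ENNReal.ofReal_div_of_pos (ENNReal.ofReal_pos.1 hpos), mul_comm, div_eq_mul_inv]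
end

section
/- (Series expansion for the CDF of a weighted sum of exponentials.) Let n ≥ 1, let β_1, …, β_n > 0, set β_min = min_i β_i, and let z_1, …, z_n be i.i.d. exponential random variables with mean 1. Define γ_k = Σ_{i=1}^n (1/k)(1 − β_min/β_i)^k for k ≥ 1, and δ_0 = 1, δ_{k+1} = (1/(k+1)) Σ_{l=1}^{k+1} l γ_l δ_{k+1−l} for k ≥ 0. Then for every x ≥ 0, P(Σ_{i=1}^n β_i z_i ≤ x) = (∏_{i=1}^n β_min/β_i) · Σ_{k=0}^∞ δ_k · p(x/β_min, n + k), where p(x,a) denotes the regularized lower incomplete Gamma function p(x,a) = (1/Γ(a)) ∫₀ˣ τ^{a−1} e^{−τ} dτ, and the series converges. -/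
open MeasureTheory ProbabilityTheory Real Finset

/-- The regularized lower incomplete Gamma function
`p(x,a) = (1/Γ(a)) ∫₀ˣ τ^{a-1} e^{-τ} dτ`. -/
noncomputable def regIncGamma (x a : ℝ) : ℝ :=
  (1 / Real.Gamma a) * ∫ τ in (0:ℝ)..x, τ ^ (a - 1) * Real.exp (-τ)

/-- The coefficients `δ₀ = 1`, `δ_{k+1} = (1/(k+1)) ∑_{l=1}^{k+1} l γ_l δ_{k+1-l}`. -/
noncomputable def deltaSeq (γ : ℕ → ℝ) : ℕ → ℝ
  | 0 => 1
  | k + 1 =>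
      (1 / ((k : ℝ) + 1)) *
        ∑ l ∈ Finset.range (k + 1), ((l : ℝ) + 1) * γ (l + 1) * deltaSeq γ (k - l)
  decreasing_by omega

open scoped ENNReal Nat

noncomputable def GG : ℕ → Measure ℝ
  | 0 => Measure.dirac 0
  | m + 1 => GG m ∗ expMeasure 1

instance GG_prob (m : ℕ) : IsProbabilityMeasure (GG m) := by
  have := isProbabilityMeasure_expMeasure (r := 1) one_pos
  induction m with
  | zero => rw [GG]; infer_instance
  | succ m ih => rw [GG]; infer_instance

lemma GG_add (m k : ℕ) : GG m ∗ GG k = GG (m + k) := by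
  have := isProbabilityMeasure_expMeasure (r := 1) one_pos
  induction k with
  | zero => rw [GG]; simp
  | succ k ih => rw [GG, ← Measure.conv_assoc, ih, ← add_assoc, GG]

lemma GG_conv_sum (a b : ℕ → ℝ≥0∞) (m l : ℕ) :
    Measure.sum (fun k => a k • GG (m + k)) ∗ Measure.sum (fun j => b j • GG (l + j)) =
      Measure.sum (fun N => (∑ p ∈ antidiagonal N, a p.1 * b p.2) • GG (m + l + N)) := by
  have h1 : Measure.sum (fun k => a k • GG (m + k)) ∗ Measure.sum (fun j => b j • GG (l + j)) =
      Measure.sum (fun p : ℕ × ℕ => (a p.1 * b p.2) • GG (m + l + (p.1 + p.2))) := by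
    rw [Measure.conv, Measure.prod_sum, Measure.map_sum (by fun_prop)]
    congr 1
    funext p
    rw [Measure.prod_smul_left, Measure.prod_smul_right, smul_smul, Measure.map_smul]
    congr 1
    rw [← Measure.conv, GG_add]
    congr 1; ring
  rw [h1]
  ext s hs
  rw [Measure.sum_apply _ hs, Measure.sum_apply _ hs,
    ← (HasAntidiagonal.sigmaAntidiagonalEquivProd (A := ℕ)).tsum_eq, ENNReal.tsum_sigma']
  congr 1
  funext N
  rw [Measure.smul_apply, smul_eq_mul, Finset.sum_mul, tsum_fintype, ← Finset.sum_coe_sort (antidiagonal N)]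
  apply Finset.sum_congr rfl
  rintro ⟨p, hp⟩ -
  rw [HasAntidiagonal.mem_antidiagonal] at hp
  simp [HasAntidiagonal.sigmaAntidiagonalEquivProd, hp]

noncomputable def gd (m : ℕ) (x : ℝ) : ℝ := if 0 ≤ x then x ^ m / m ! * Real.exp (-x) else 0

lemma gd_meas (m : ℕ) : Measurable (gd m) :=
  Measurable.ite measurableSet_Ici (by fun_prop) measurable_const

lemma gd_nonneg (m : ℕ) (x : ℝ) : 0 ≤ gd m x := by
  unfold gd; split_ifs <;> positivity

lemma exp_gd : expMeasure 1 = volume.withDensity (fun x => ENNReal.ofReal (gd 0 x)) := by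
  rw [expMeasure, gammaMeasure]
  congr 1
  funext x
  simp [gammaPDF, gammaPDFReal, gd]

lemma gd_conv (m : ℕ) (x : ℝ) :
    ∫⁻ y, ENNReal.ofReal (gd m y) * ENNReal.ofReal (gd 0 (-y + x)) = ENNReal.ofReal (gd (m+1) x) := by
  have h : ∀ y, ENNReal.ofReal (gd m y) * ENNReal.ofReal (gd 0 (-y + x)) =
      (Set.Icc 0 x).indicator (fun y => ENNReal.ofReal (y ^ m * (Real.exp (-x) / m !))) y := by
    intro y
    rw [← ENNReal.ofReal_mul (gd_nonneg _ _)]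
    by_cases h1 : 0 ≤ y
    · by_cases h2 : y ≤ x
      · rw [Set.indicator_of_mem (Set.mem_Icc.2 ⟨h1, h2⟩), gd, gd, if_pos h1, if_pos (by linarith)]
        congr 1
        have : Real.exp (-x) = Real.exp (-y) * Real.exp (-(-y + x)) := by
          rw [← Real.exp_add]; congr 1; ring
        rw [this]; simp; ring
      · rw [Set.indicator_of_notMem (by simp [h2]), gd, gd, if_neg (c := 0 ≤ -y + x) (by linarith)]
        simp
    · rw [Set.indicator_of_notMem (by simp [h1]), gd, if_neg h1]
      simp
  simp_rw [h]
  rw [lintegral_indicator measurableSet_Icc]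
  by_cases hx : 0 ≤ x
  · rw [← ofReal_integral_eq_lintegral_ofReal]
    · rw [integral_Icc_eq_integral_Ioc, ← intervalIntegral.integral_of_le hx,
        intervalIntegral.integral_mul_const, integral_pow, gd, if_pos hx]
      congr 1
      rw [Nat.factorial_succ]
      push_cast
      field_simp
      simp
    · exact (Continuous.continuousOn (by fun_prop)).integrableOn_Icc
    · rw [Filter.EventuallyLE, ae_restrict_iff' measurableSet_Icc]
      refine ae_of_all _ fun y hy => ?_
      have := hy.1
      simp only [Pi.zero_apply]
      positivity
  · rw [Set.Icc_eq_empty (by simpa using hx)]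
    simp [gd, hx]

lemma GG_succ (m : ℕ) : GG (m + 1) = volume.withDensity (fun x => ENNReal.ofReal (gd m x)) := by
  induction m with
  | zero =>
    have := isProbabilityMeasure_expMeasure (r := 1) one_pos
    rw [GG, GG, Measure.dirac_zero_conv, exp_gd]
  | succ m ih =>
    rw [GG, ih, exp_gd, conv_withDensity_eq_lconvolution
      (gd_meas m).ennreal_ofReal (gd_meas 0).ennreal_ofReal]
    congr 1
    funext x
    rw [lconvolution, gd_conv]

lemma GG_Iic (m : ℕ) (x : ℝ) (hx : 0 ≤ x) :
    GG (m + 1) (Set.Iic x) = ENNReal.ofReal (regIncGamma x ((m + 1 : ℕ) : ℝ)) := by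
  rw [GG_succ, withDensity_apply _ measurableSet_Iic, regIncGamma]
  have : ∀ y, (Set.Iic x).indicator (fun x => ENNReal.ofReal (gd m x)) y =
    (Set.Icc 0 x).indicator (fun y => ENNReal.ofReal (1 / m ! * (y ^ m * Real.exp (-y)))) y := by
    intro y
    by_cases h1 : 0 ≤ y
    · by_cases h2 : y ≤ x
      · rw [Set.indicator_of_mem (Set.mem_Icc.2 ⟨h1, h2⟩), Set.indicator_of_mem (by simpa using h2),
          gd, if_pos h1]
        congr 1; ring
      · rw [Set.indicator_of_notMem (by simp [h2]), Set.indicator_of_notMem (by simp [h2])]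
    · rw [Set.indicator_of_notMem (s := Set.Icc 0 x) (by simp [h1])]
      simp [Set.indicator, gd, h1]
  rw [← lintegral_indicator measurableSet_Iic]
  simp_rw [this]
  rw [lintegral_indicator measurableSet_Icc, ← ofReal_integral_eq_lintegral_ofReal]
  · rw [integral_Icc_eq_integral_Ioc, ← intervalIntegral.integral_of_le hx,
        intervalIntegral.integral_const_mul]
    push_cast
    rw [Real.Gamma_nat_eq_factorial]
    simp
  · exact (Continuous.continuousOn (by fun_prop)).integrableOn_Icc
  · rw [Filter.EventuallyLE, ae_restrict_iff' measurableSet_Icc]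
    refine ae_of_all _ fun y hy => ?_
    have := hy.1
    simp only [Pi.zero_apply]
    positivity

lemma regInc_nonneg (m : ℕ) (x : ℝ) (hx : 0 ≤ x) : 0 ≤ regIncGamma x ((m + 1 : ℕ) : ℝ) := by
  unfold regIncGamma
  apply mul_nonneg
  · have := Real.Gamma_pos_of_pos (s := ((m + 1 : ℕ) : ℝ)) (by positivity)
    positivity
  · apply intervalIntegral.integral_nonneg hx
    intro u hu
    have := hu.1
    positivity

lemma exp_mix (r : ℝ) (h0 : 0 < r) (h1 : r ≤ 1) :
    expMeasure r = Measure.sum (fun k => ENNReal.ofReal (r * (1 - r) ^ k) • GG (1 + k)) := by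
  have hq : 0 ≤ 1 - r := by linarith
  have : ∀ k, ENNReal.ofReal (r * (1 - r) ^ k) • GG (1 + k) =
      volume.withDensity (fun x => ENNReal.ofReal (r * (1 - r) ^ k * gd k x)) := by
    intro k
    rw [add_comm, GG_succ, ← withDensity_smul _ (gd_meas k).ennreal_ofReal]
    congr 1; funext x
    rw [Pi.smul_apply, smul_eq_mul, ENNReal.ofReal_mul (p := r * (1 - r) ^ k) (by positivity)]
  simp_rw [this]
  rw [← withDensity_tsum (fun k => ((gd_meas k).const_mul _).ennreal_ofReal), expMeasure, gammaMeasure]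
  congr 1
  funext x
  rw [tsum_apply (Pi.summable.2 fun _ => ENNReal.summable)]
  by_cases hx : 0 ≤ x
  · have hs : HasSum (fun k : ℕ => r * (1 - r) ^ k * gd k x) (r * Real.exp (-(r * x))) := by
      have := (NormedSpace.expSeries_div_hasSum_exp ((1 - r) * x)).mul_left (r * Real.exp (-x))
      rw [← Real.exp_eq_exp_ℝ] at this
      have e1 : (fun k : ℕ => r * (1 - r) ^ k * gd k x) =
          fun k : ℕ => r * Real.exp (-x) * (((1 - r) * x) ^ k / k !) := by
        funext k; rw [gd, if_pos hx, mul_pow]; ring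
      have e2 : r * Real.exp (-(r * x)) = r * Real.exp (-x) * Real.exp ((1 - r) * x) := by
        rw [mul_assoc, ← Real.exp_add]; congr 2; ring
      rw [e1, e2]
      exact this
    rw [← ENNReal.ofReal_tsum_of_nonneg (fun k => mul_nonneg (by positivity) (gd_nonneg _ _)) hs.summable,
      hs.tsum_eq]
    simp [gammaPDF, gammaPDFReal, hx]
  · simp [gammaPDF, gammaPDFReal, gd, hx]

lemma map_exp (c : ℝ) (hc : 0 < c) : (expMeasure 1).map (fun x => c * x) = expMeasure (1 / c) := by
  have := isProbabilityMeasure_expMeasure (r := 1) one_pos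
  have := isProbabilityMeasure_expMeasure (r := 1 / c) (by positivity)
  have : IsProbabilityMeasure ((expMeasure 1).map (fun x => c * x)) :=
    Measure.isProbabilityMeasure_map (by fun_prop)
  apply Measure.eq_of_cdf
  ext t
  have : cdf ((expMeasure 1).map (fun x => c * x)) t = cdf (expMeasure 1) (t / c) := by
    rw [cdf_eq_real, cdf_eq_real, map_measureReal_apply (by fun_prop) measurableSet_Iic]
    congr 1
    ext y
    simp [le_div_iff₀ hc, mul_comm]
  rw [this, cdf_expMeasure_eq one_pos, cdf_expMeasure_eq (by positivity)]
  have : 0 ≤ t / c ↔ 0 ≤ t := by simp [le_div_iff₀ hc]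
  simp only [this]
  congr 4
  ring_nf

open PowerSeries in
lemma deriv_geo (q : ℝ) :
    d⁄dX ℝ (PowerSeries.mk fun k => q ^ k) =
      PowerSeries.mk (fun k => q ^ k) * PowerSeries.mk (fun k => q ^ (k + 1)) := by
  ext k
  rw [PowerSeries.coeff_derivative, PowerSeries.coeff_mul, PowerSeries.coeff_mk]
  simp only [PowerSeries.coeff_mk]
  rw [Finset.sum_congr rfl (g := fun _ => q ^ (k + 1))]
  · simp [mul_comm]
  · intro p hp
    rw [HasAntidiagonal.mem_antidiagonal] at hp
    rw [← pow_add, ← hp, add_assoc]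

open PowerSeries in
lemma deriv_prod {ι : Type*} (s : Finset ι) (q : ι → ℝ) :
    d⁄dX ℝ (∏ i ∈ s, PowerSeries.mk fun k => q i ^ k) =
      (∏ i ∈ s, PowerSeries.mk fun k => q i ^ k) *
        PowerSeries.mk (fun k => ∑ i ∈ s, q i ^ (k + 1)) := by
  classical
  induction s using Finset.induction_on with
  | empty => 
    simp only [Finset.prod_empty, Finset.sum_empty]
    ext k
    simp
  | insert a s ha ih =>
    have h : PowerSeries.mk (fun k => ∑ i ∈ insert a s, q i ^ (k + 1)) =
      PowerSeries.mk (fun k => q a ^ (k + 1)) + PowerSeries.mk (fun k => ∑ i ∈ s, q i ^ (k + 1)) := by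
      ext k; simp [Finset.sum_insert ha]
    rw [h, Finset.prod_insert ha, Derivation.leibniz, ih, deriv_geo]
    simp only [smul_eq_mul]
    ring

lemma delta_eq {ι : Type*} (s : Finset ι) (q : ι → ℝ) (γ : ℕ → ℝ)
    (hγ : ∀ k : ℕ, 1 ≤ k → γ k = ∑ i ∈ s, (1 / (k : ℝ)) * q i ^ k) (k : ℕ) :
    deltaSeq γ k = PowerSeries.coeff k (∏ i ∈ s, PowerSeries.mk fun k => q i ^ k) := by
  induction k using Nat.strong_induction_on with
  | _ k ih =>
    cases k with
    | zero =>
      rw [deltaSeq, PowerSeries.coeff_zero_eq_constantCoeff_apply, map_prod]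
      symm
      apply Finset.prod_eq_one
      intro i _
      rw [← PowerSeries.coeff_zero_eq_constantCoeff_apply]; simp
    | succ k =>
      have h := congrArg (PowerSeries.coeff k) (deriv_prod s q)
      rw [PowerSeries.coeff_derivative, mul_comm (∏ i ∈ s, _), PowerSeries.coeff_mul,
        Finset.Nat.sum_antidiagonal_eq_sum_range_succ_mk] at h
      rw [deltaSeq]
      have hk : (k : ℝ) + 1 ≠ 0 := by positivity
      rw [one_div, inv_mul_eq_iff_eq_mul₀ hk, mul_comm, h]
      apply Finset.sum_congr rfl
      intro l hl
      rw [ih (k - l) (by omega), hγ _ (by omega), PowerSeries.coeff_mk, ← Finset.mul_sum]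
      push_cast
      field_simp

lemma coeff_prod_nonneg {ι : Type*} (s : Finset ι) (e : ι → PowerSeries ℝ)
    (he : ∀ i k, 0 ≤ PowerSeries.coeff k (e i)) (k : ℕ) :
    0 ≤ PowerSeries.coeff k (∏ i ∈ s, e i) := by
  classical
  induction s using Finset.induction_on generalizing k with
  | empty => simp [PowerSeries.coeff_one]; split_ifs <;> simp
  | insert a s ha ih =>
    rw [Finset.prod_insert ha, PowerSeries.coeff_mul]
    exact Finset.sum_nonneg fun p _ => mul_nonneg (he _ _) (ih _)

lemma meas_sum {Ω ι : Type*} [MeasurableSpace Ω] (Y : ι → Ω → ℝ) (hY : ∀ i, Measurable (Y i))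
    (s : Finset ι) : Measurable (∑ i ∈ s, Y i) := by
  have : (∑ i ∈ s, Y i) = fun ω => ∑ i ∈ s, Y i ω := by ext ω; simp
  rw [this]
  exact Finset.measurable_sum _ fun i _ => hY i

lemma law_sum {Ω ι : Type*} [MeasureSpace Ω] [IsProbabilityMeasure (ℙ : Measure Ω)]
    (r : ι → ℝ) (h0 : ∀ i, 0 < r i) (h1 : ∀ i, r i ≤ 1)
    (Y : ι → Ω → ℝ) (hY : ∀ i, Measurable (Y i)) (hind : iIndepFun Y ℙ)
    (hlaw : ∀ i, Measure.map (Y i) ℙ = expMeasure (r i)) (s : Finset ι) :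
    Measure.map (∑ i ∈ s, Y i) ℙ = Measure.sum (fun k => ENNReal.ofReal
      (PowerSeries.coeff k (∏ i ∈ s, PowerSeries.mk fun k => r i * (1 - r i) ^ k)) • GG (#s + k)) := by
  classical
  have hnn : ∀ i k, 0 ≤ PowerSeries.coeff k (PowerSeries.mk fun k => r i * (1 - r i) ^ k) := by
    intro i k
    rw [PowerSeries.coeff_mk]
    exact mul_nonneg (h0 i).le (pow_nonneg (by linarith [h1 i]) _)
  induction s using Finset.induction_on with
  | empty =>
    ext t ht
    rw [Measure.sum_apply _ ht, tsum_eq_single 0]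
    · simp [GG, Pi.zero_def]
    · intro k hk
      simp [PowerSeries.coeff_one, hk]
  | insert a s ha ih =>
    rw [Finset.sum_insert ha, add_comm (Y a), (hind.indepFun_finsetSum_of_notMem hY ha).map_add_eq_map_conv_map
      (meas_sum Y hY s) (hY a), ih, hlaw, exp_mix _ (h0 a) (h1 a), GG_conv_sum,
      Finset.card_insert_of_notMem ha]
    congr 1
    funext N
    congr 1
    rw [Finset.prod_insert ha, mul_comm, PowerSeries.coeff_mul, ENNReal.ofReal_sum_of_nonneg]
    · apply Finset.sum_congr rfl
      intro p _
      rw [ENNReal.ofReal_mul (coeff_prod_nonneg _ _ hnn _), PowerSeries.coeff_mk]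
    · intro p _
      exact mul_nonneg (coeff_prod_nonneg _ _ hnn _) (hnn _ _)

/-- Series expansion for the CDF of a weighted sum of i.i.d. unit-mean exponentials:
`P(∑ᵢ βᵢ zᵢ ≤ x) = (∏ᵢ β_min/βᵢ) ∑_{k=0}^∞ δ_k p(x/β_min, n+k)`, and the series converges. -/
theorem stmt6
    {Ω : Type*} [MeasureSpace Ω] [IsProbabilityMeasure (ℙ : Measure Ω)]
    (n : ℕ) (hn : 1 ≤ n)
    (β : Fin n → ℝ) (hβ : ∀ i, 0 < β i)
    (βmin : ℝ) (hβmin_le : ∀ i, βmin ≤ β i) (hβmin_mem : ∃ i, β i = βmin)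
    (z : Fin n → Ω → ℝ) (hzmeas : ∀ i, Measurable (z i))
    (hzindep : iIndepFun z ℙ)
    (hzlaw : ∀ i, Measure.map (z i) ℙ = expMeasure 1)
    (γ : ℕ → ℝ) (hγ : ∀ k : ℕ, 1 ≤ k → γ k = ∑ i, (1 / (k : ℝ)) * (1 - βmin / β i) ^ k)
    (x : ℝ) (hx : 0 ≤ x) :
    Summable (fun k : ℕ => deltaSeq γ k * regIncGamma (x / βmin) ((n : ℝ) + k)) ∧
      ℙ {ω | ∑ i, β i * z i ω ≤ x} =
        ENNReal.ofReal
          ((∏ i, βmin / β i) *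
            ∑' k : ℕ, deltaSeq γ k * regIncGamma (x / βmin) ((n : ℝ) + k)) := by
  obtain ⟨i0, hi0⟩ := hβmin_mem
  have hm : 0 < βmin := hi0 ▸ hβ i0
  have h0 : ∀ i, 0 < βmin / β i := fun i => div_pos hm (hβ i)
  have h1 : ∀ i, βmin / β i ≤ 1 := fun i => (div_le_one (hβ i)).2 (hβmin_le i)
  have hy : 0 ≤ x / βmin := by positivity
  obtain ⟨m, rfl⟩ : ∃ m, n = m + 1 := ⟨n - 1, by omega⟩
  have hc : ∀ k : ℕ, ((m + 1 : ℕ) : ℝ) + k = ((m + k + 1 : ℕ) : ℝ) := by intro k; push_cast; ring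
  set Y : Fin (m + 1) → Ω → ℝ := fun i ω => β i / βmin * z i ω with hYdef
  have hY : ∀ i, Measurable (Y i) := fun i => (hzmeas i).const_mul _
  have hind : iIndepFun Y ℙ :=
    hzindep.comp (fun i t => β i / βmin * t) (fun i => measurable_const_mul _)
  have hlaw : ∀ i, Measure.map (Y i) ℙ = expMeasure (βmin / β i) := by
    intro i
    have : Y i = (fun t => β i / βmin * t) ∘ z i := rfl
    rw [this, ← Measure.map_map (measurable_const_mul _) (hzmeas i), hzlaw,
      map_exp _ (div_pos (hβ i) hm), one_div_div]
  have hL := law_sum (fun i => βmin / β i) h0 h1 Y hY hind hlaw Finset.univ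
  set D : ℕ → ℝ := deltaSeq γ with hD
  have hDeq := delta_eq Finset.univ (fun i => 1 - βmin / β i) γ hγ
  have hDnn : ∀ k, 0 ≤ D k := by
    intro k
    rw [hD, hDeq]
    refine coeff_prod_nonneg _ _ (fun i k => ?_) k
    rw [PowerSeries.coeff_mk]
    exact pow_nonneg (by linarith [h1 i]) _
  have hcoef : ∀ k, PowerSeries.coeff k (∏ i, PowerSeries.mk fun k => βmin / β i * (1 - βmin / β i) ^ k)
      = (∏ i, βmin / β i) * D k := by
    intro k
    rw [hD, hDeq, ← PowerSeries.coeff_C_mul, map_prod PowerSeries.C, ← Finset.prod_mul_distrib]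
    congr 1
    apply Finset.prod_congr rfl
    intro i _
    ext k
    simp
  have hP : 0 < ∏ i, βmin / β i := Finset.prod_pos fun i _ => h0 i
  have hset : {ω | ∑ i, β i * z i ω ≤ x} = (∑ i, Y i) ⁻¹' (Set.Iic (x / βmin)) := by
    ext ω
    have : ∑ i, β i / βmin * z i ω = (∑ i, β i * z i ω) / βmin := by
      rw [Finset.sum_div]
      exact Finset.sum_congr rfl fun i _ => by ring
    simp only [Set.mem_ofPred_eq, Set.mem_preimage, Finset.sum_apply, Set.mem_Iic, hYdef, this]
    rw [div_le_div_iff_of_pos_right hm]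
  have hterm : ∀ k : ℕ, 0 ≤ (∏ i, βmin / β i) * (D k * regIncGamma (x / βmin) (((m + 1 : ℕ) : ℝ) + k)) := by
    intro k
    rw [hc]
    exact mul_nonneg hP.le (mul_nonneg (hDnn k) (regInc_nonneg _ _ hy))
  have hprob : ℙ {ω | ∑ i, β i * z i ω ≤ x} = ∑' k : ℕ, ENNReal.ofReal
      ((∏ i, βmin / β i) * (D k * regIncGamma (x / βmin) (((m + 1 : ℕ) : ℝ) + k))) := by
    rw [hset, ← Measure.map_apply (meas_sum Y hY _) measurableSet_Iic, hL,
      Measure.sum_apply _ measurableSet_Iic]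
    congr 1
    funext k
    rw [Measure.smul_apply, smul_eq_mul, hcoef, Finset.card_univ, Fintype.card_fin,
      add_right_comm, GG_Iic _ _ hy, ← ENNReal.ofReal_mul (mul_nonneg hP.le (hDnn k)), hc, mul_assoc]
  have hsum : Summable fun k : ℕ =>
      (∏ i, βmin / β i) * (D k * regIncGamma (x / βmin) (((m + 1 : ℕ) : ℝ) + k)) := by
    have hne : ∑' k : ℕ, ENNReal.ofReal
      ((∏ i, βmin / β i) * (D k * regIncGamma (x / βmin) (((m + 1 : ℕ) : ℝ) + k))) ≠ ⊤ := by
      rw [← hprob]; exact measure_ne_top _ _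
    have := ENNReal.summable_toReal hne
    refine this.congr fun k => ?_
    rw [ENNReal.toReal_ofReal (hterm k)]
  refine ⟨(summable_mul_left_iff hP.ne').1 hsum, ?_⟩
  rw [hprob, ← ENNReal.ofReal_tsum_of_nonneg hterm hsum, tsum_mul_left]
end

section
/- Let M ≥ 2 be an integer, p_0, …, p_{M−1} ∈ (0,1), θ > 0 and n > 0, and define f(χ) = χ^M − (1−p_0) e^{−θn} χ^{M−1} − Σ_{m=1}^{M−2} (1−p_m) e^{−θn} (∏_{j=0}^{m−1} p_j) χ^{M−1−m} − e^{−θn} ∏_{j=0}^{M−1} p_j, and let χ* be its unique positive real root. Then (e^{−θn} ∏_{j=0}^{M−1} p_j)^{1/M} ≤ χ* < 1. In particular, the effective capacity ρ_S(θ) = −(1/(θT)) log χ* satisfies 0 < ρ_S(θ) ≤ n/(TM) + (1/(θTM)) log(1/∏_{j=0}^{M−1} p_j) for any T > 0. -/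
open Finset Real

/-- Bounds on the root of Theorem 1:
`(e^{-θn} ∏_{j<M} p_j)^{1/M} ≤ χ* < 1`; hence the effective capacity
`ρ_S(θ) = -(1/(θT)) log χ*` satisfies
`0 < ρ_S(θ) ≤ n/(TM) + (1/(θTM)) log (1/∏_{j<M} p_j)` for any `T > 0`. -/
theorem stmt12
    (M : ℕ) (hM : 2 ≤ M) (p : ℕ → ℝ)
    (hp : ∀ m, m ≤ M - 1 → p m ∈ Set.Ioo (0 : ℝ) 1)
    (θ n : ℝ) (hθ : 0 < θ) (hn : 0 < n)
    (f : ℝ → ℝ)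
    (hf : ∀ χ : ℝ,
      f χ = χ ^ M - (1 - p 0) * Real.exp (-θ * n) * χ ^ (M - 1) -
        (∑ m ∈ Finset.Icc 1 (M - 2),
          (1 - p m) * Real.exp (-θ * n) * (∏ j ∈ Finset.range m, p j) * χ ^ (M - 1 - m)) -
        Real.exp (-θ * n) * ∏ j ∈ Finset.range M, p j)
    (χs : ℝ) (hχs_pos : 0 < χs) (hχs_root : f χs = 0)
    (hχs_uniq : ∀ χ : ℝ, 0 < χ → f χ = 0 → χ = χs) :
    (Real.exp (-θ * n) * ∏ j ∈ Finset.range M, p j) ^ ((1 : ℝ) / M) ≤ χs ∧ χs < 1 ∧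
      ∀ T : ℝ, 0 < T →
        0 < -(1 / (θ * T)) * Real.log χs ∧
          -(1 / (θ * T)) * Real.log χs ≤
            n / (T * M) + (1 / (θ * T * M)) * Real.log (1 / ∏ j ∈ Finset.range M, p j) := by
  obtain ⟨k, rfl⟩ : ∃ k, M = k + 2 := ⟨M - 2, by omega⟩
  have hp0 : ∀ m, m < k + 2 → 0 < p m := fun m hm => (hp m (by omega)).1
  have hp1 : ∀ m, m < k + 2 → p m < 1 := fun m hm => (hp m (by omega)).2
  have hP : ∀ m, m ≤ k + 2 → 0 < ∏ j ∈ Finset.range m, p j := fun m hm =>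
    Finset.prod_pos (fun j hj => hp0 j (by have := Finset.mem_range.1 hj; omega))
  have he : Real.exp (-θ * n) < 1 := by
    rw [Real.exp_lt_one_iff]; nlinarith [mul_pos hθ hn]
  have he0 : 0 < Real.exp (-θ * n) := Real.exp_pos _
  have hlogc : Real.log (Real.exp (-θ * n) * ∏ j ∈ Finset.range (k + 2), p j)
      = -θ * n + Real.log (∏ j ∈ Finset.range (k + 2), p j) := by
    rw [Real.log_mul he0.ne' (hP _ le_rfl).ne', Real.log_exp]
  rw [hf] at hχs_root
  have e1 : k + 2 - 1 = k + 1 := by omega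
  have e2 : k + 2 - 2 = k := by omega
  rw [e1, e2] at hχs_root
  set e := Real.exp (-θ * n) with hedef
  have hc : 0 < e * ∏ j ∈ Finset.range (k + 2), p j := mul_pos he0 (hP _ le_rfl)
  have hlow : e * ∏ j ∈ Finset.range (k + 2), p j ≤ χs ^ (k + 2) := by
    have h1 : 0 ≤ (1 - p 0) * e * χs ^ (k + 1) := by
      have := hp1 0 (by omega)
      have : 0 ≤ 1 - p 0 := by linarith
      positivity
    have h2 : 0 ≤ ∑ m ∈ Finset.Icc 1 k,
          (1 - p m) * e * (∏ j ∈ Finset.range m, p j) * χs ^ (k + 1 - m) := by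
      apply Finset.sum_nonneg
      intro m hm
      have hm' := Finset.mem_Icc.1 hm
      have := hp1 m (by omega)
      have h3 : 0 ≤ 1 - p m := by linarith
      have h4 := hP m (by omega)
      positivity
    linarith
  have hlt : χs < 1 := by
    by_contra hcon
    have hge : 1 ≤ χs := not_lt.1 hcon
    have htel : ∀ K, ∑ m ∈ Finset.Icc 1 K, (1 - p m) * e * (∏ j ∈ Finset.range m, p j)
        = e * (p 0 - ∏ j ∈ Finset.range (K + 1), p j) := by
      intro K
      induction K with
      | zero => simp
      | succ K ih =>
        rw [Finset.sum_Icc_succ_top (by omega), ih, Finset.prod_range_succ _ (K + 1)]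
        ring
    have hsum : ∑ m ∈ Finset.Icc 1 k,
          (1 - p m) * e * (∏ j ∈ Finset.range m, p j) * χs ^ (k + 1 - m)
        ≤ e * (p 0 - ∏ j ∈ Finset.range (k + 1), p j) * χs ^ (k + 1) := by
      rw [← htel, Finset.sum_mul]
      apply Finset.sum_le_sum
      intro m hm
      have hm' := Finset.mem_Icc.1 hm
      have := hp1 m (by omega)
      have h3 : 0 ≤ 1 - p m := by linarith
      have h4 := hP m (by omega)
      apply mul_le_mul_of_nonneg_left
      · exact pow_le_pow_right₀ hge (by omega)
      · positivity
    have hX : 1 ≤ χs ^ (k + 1) := one_le_pow₀ hge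
    have hX2 : χs ^ (k + 1) ≤ χs ^ (k + 2) := pow_le_pow_right₀ hge (by omega)
    have hQ : ∏ j ∈ Finset.range (k + 2), p j ≤ ∏ j ∈ Finset.range (k + 1), p j := by
      rw [Finset.prod_range_succ _ (k + 1)]
      exact mul_le_of_le_one_right (hP _ (by omega)).le (hp1 _ (by omega)).le
    have h5 : e * ∏ j ∈ Finset.range (k + 2), p j
        ≤ e * (∏ j ∈ Finset.range (k + 1), p j) * χs ^ (k + 1) := by
      calc _ ≤ e * ∏ j ∈ Finset.range (k + 1), p j := by gcongr
        _ ≤ _ := le_mul_of_one_le_right (mul_pos he0 (hP _ (by omega))).le hX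
    have h6 : χs ^ (k + 2) ≤ e * χs ^ (k + 1) := by linarith
    have h7 : e * χs ^ (k + 1) < 1 * χs ^ (k + 1) := by gcongr
    linarith
  have hMpos : (0 : ℝ) < ((k + 2 : ℕ) : ℝ) := by positivity
  refine ⟨?_, hlt, ?_⟩
  · calc _ ≤ (χs ^ (k + 2)) ^ ((1 : ℝ) / ((k + 2 : ℕ) : ℝ)) := by
          apply Real.rpow_le_rpow hc.le hlow; positivity
      _ = χs := by
          rw [one_div]; exact Real.pow_rpow_inv_natCast hχs_pos.le (by omega)
  · intro T hT
    have hl : Real.log χs < 0 := Real.log_neg hχs_pos hlt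
    have hpos : 0 < 1 / (θ * T) := by positivity
    refine ⟨by nlinarith [mul_pos hpos (neg_pos.2 hl)], ?_⟩
    have h8 := Real.log_le_log hc hlow
    rw [hlogc, Real.log_pow] at h8
    rw [one_div (∏ j ∈ Finset.range (k + 2), p j), Real.log_inv]
    generalize Real.log (∏ j ∈ Finset.range (k + 2), p j) = L at *
    generalize ((k + 2 : ℕ) : ℝ) = N at *
    have h9 : n / (T * N) + 1 / (θ * T * N) * -L - -(1 / (θ * T)) * Real.log χs
        = (N * Real.log χs - (-θ * n + L)) / (θ * T * N) := by
      field_simp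
      ring
    have h10 : 0 ≤ (N * Real.log χs - (-θ * n + L)) / (θ * T * N) :=
      div_nonneg (by linarith) (by positivity)
    linarith
end

section
/- Let M ≥ 2 be an integer and p_0, …, p_{M−1} ∈ (0,1), n > 0. For each θ > 0 let χ*(θ) be the unique positive real root of f_θ(χ) = χ^M − (1−p_0) e^{−θn} χ^{M−1} − Σ_{m=1}^{M−2} (1−p_m) e^{−θn} (∏_{j=0}^{m−1} p_j) χ^{M−1−m} − e^{−θn} ∏_{j=0}^{M−1} p_j. Then the function θ ↦ χ*(θ) is strictly decreasing on (0, ∞). -/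
open Finset Real

/-- The unique positive root `χ*(θ)` of `f_θ` is strictly decreasing in the QoS
exponent `θ` on `(0, ∞)`. -/
theorem stmt15
    (M : ℕ) (hM : 2 ≤ M) (p : ℕ → ℝ)
    (hp : ∀ m, m ≤ M - 1 → p m ∈ Set.Ioo (0 : ℝ) 1)
    (n : ℝ) (hn : 0 < n)
    (f : ℝ → ℝ → ℝ)
    (hf : ∀ θ χ : ℝ,
      f θ χ = χ ^ M - (1 - p 0) * Real.exp (-θ * n) * χ ^ (M - 1) -
        (∑ m ∈ Finset.Icc 1 (M - 2),
          (1 - p m) * Real.exp (-θ * n) * (∏ j ∈ Finset.range m, p j) * χ ^ (M - 1 - m)) -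
        Real.exp (-θ * n) * ∏ j ∈ Finset.range M, p j)
    (χstar : ℝ → ℝ)
    (hχstar : ∀ θ : ℝ, 0 < θ →
      0 < χstar θ ∧ f θ (χstar θ) = 0 ∧ ∀ χ : ℝ, 0 < χ → f θ χ = 0 → χ = χstar θ) :
    StrictAntiOn χstar (Set.Ioi 0) := by
  intro s hs t ht hst
  obtain ⟨ha, hfa, -⟩ := hχstar s hs
  obtain ⟨hb, hfb, -⟩ := hχstar t ht
  by_contra hcon
  have hab : χstar s ≤ χstar t := not_lt.mp hcon
  generalize χstar s = a at *
  generalize χstar t = b at *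
  obtain ⟨G, hG⟩ : ∃ G : ℝ → ℝ, ∀ x, G x = (1 - p 0) * x ^ (M - 1) +
      (∑ m ∈ Finset.Icc 1 (M - 2),
        (1 - p m) * (∏ j ∈ Finset.range m, p j) * x ^ (M - 1 - m)) +
      ∏ j ∈ Finset.range M, p j := ⟨_, fun _ => rfl⟩
  have hfG : ∀ θ x, f θ x = x ^ M - Real.exp (-θ * n) * G x := by
    intro θ x
    have h : (∑ m ∈ Finset.Icc 1 (M - 2),
          (1 - p m) * Real.exp (-θ * n) * (∏ j ∈ Finset.range m, p j) * x ^ (M - 1 - m))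
        = Real.exp (-θ * n) * ∑ m ∈ Finset.Icc 1 (M - 2),
          (1 - p m) * (∏ j ∈ Finset.range m, p j) * x ^ (M - 1 - m) := by
      rw [Finset.mul_sum]
      exact Finset.sum_congr rfl fun m _ => by ring
    rw [hf, hG, h]
    ring
  have hprod : ∀ m, m ≤ M → 0 < ∏ j ∈ Finset.range m, p j := by
    intro m hm
    refine Finset.prod_pos fun j hj => (hp j ?_).1
    have := Finset.mem_range.mp hj
    omega
  have key : ∀ k, k ≤ M → b ^ k * a ^ M ≤ a ^ k * b ^ M := by
    intro k hk
    obtain ⟨d, rfl⟩ := Nat.exists_eq_add_of_le hk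
    have h1 : a ^ d ≤ b ^ d := pow_le_pow_left₀ ha.le hab d
    have h2 : 0 ≤ a ^ k * b ^ k := by positivity
    have h3 := mul_le_mul_of_nonneg_left h1 h2
    rw [pow_add, pow_add]
    linarith
  have hGle : G b * a ^ M ≤ G a * b ^ M := by
    rw [hG, hG, add_mul, add_mul, add_mul, add_mul, Finset.sum_mul, Finset.sum_mul]
    refine add_le_add (add_le_add ?_ (Finset.sum_le_sum fun m hm => ?_)) ?_
    · rw [mul_assoc, mul_assoc]
      exact mul_le_mul_of_nonneg_left (key _ (by omega)) (by linarith [(hp 0 (by omega)).2])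
    · have hm' := Finset.mem_Icc.mp hm
      rw [mul_assoc, mul_assoc _ (a ^ _)]
      exact mul_le_mul_of_nonneg_left (key _ (by omega))
        (mul_nonneg (by linarith [(hp m (by omega)).2]) (hprod m (by omega)).le)
    · have := key 0 (by omega)
      simp only [pow_zero, one_mul] at this
      exact mul_le_mul_of_nonneg_left this (hprod M le_rfl).le
  rw [hfG] at hfa hfb
  have haM : 0 < a ^ M := by positivity
  have hbM : 0 < b ^ M := by positivity
  have he : Real.exp (-t * n) < Real.exp (-s * n) := by
    apply Real.exp_lt_exp.mpr
    nlinarith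
  have hGa : 0 < G a := by
    have h : 0 < Real.exp (-s * n) * G a := by linarith
    exact (mul_pos_iff_of_pos_left (Real.exp_pos _)).mp h
  have h1 := mul_le_mul_of_nonneg_left hGle (Real.exp_pos (-t * n)).le
  have h2 := mul_lt_mul_of_pos_right he (mul_pos hGa hbM)
  have h3 : b ^ M * a ^ M = Real.exp (-t * n) * (G b * a ^ M) := by
    rw [← mul_assoc, ← sub_eq_zero.mp hfb]
  have h4 : a ^ M * b ^ M = Real.exp (-s * n) * (G a * b ^ M) := by
    rw [← mul_assoc, ← sub_eq_zero.mp hfa]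
  linarith
end

section
/- Let M ≥ 2 be an integer and p_0, …, p_{M−1} ∈ (0,1), n > 0, T > 0. For each θ > 0 let χ*(θ) be the unique positive real root of f_θ(χ) = χ^M − (1−p_0) e^{−θn} χ^{M−1} − Σ_{m=1}^{M−2} (1−p_m) e^{−θn} (∏_{j=0}^{m−1} p_j) χ^{M−1−m} − e^{−θn} ∏_{j=0}^{M−1} p_j. Then the effective capacity ρ_S(θ) = −(1/(θT)) log χ*(θ) satisfies lim_{θ→∞} ρ_S(θ) = n/(TM). -/
open Finset Real Filter

/-- As the QoS exponent `θ → ∞`, the effective capacity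
`ρ_S(θ) = -(1/(θT)) log χ*(θ)` tends to the minimum rate `n/(TM)`. -/
theorem stmt16
    (M : ℕ) (hM : 2 ≤ M) (p : ℕ → ℝ)
    (hp : ∀ m, m ≤ M - 1 → p m ∈ Set.Ioo (0 : ℝ) 1)
    (n T : ℝ) (hn : 0 < n) (hT : 0 < T)
    (f : ℝ → ℝ → ℝ)
    (hf : ∀ θ χ : ℝ,
      f θ χ = χ ^ M - (1 - p 0) * Real.exp (-θ * n) * χ ^ (M - 1) -
        (∑ m ∈ Finset.Icc 1 (M - 2),
          (1 - p m) * Real.exp (-θ * n) * (∏ j ∈ Finset.range m, p j) * χ ^ (M - 1 - m)) -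
        Real.exp (-θ * n) * ∏ j ∈ Finset.range M, p j)
    (χstar : ℝ → ℝ)
    (hχstar : ∀ θ : ℝ, 0 < θ →
      0 < χstar θ ∧ f θ (χstar θ) = 0 ∧ ∀ χ : ℝ, 0 < χ → f θ χ = 0 → χ = χstar θ) :
    Tendsto (fun θ : ℝ => -(1 / (θ * T)) * Real.log (χstar θ)) atTop
      (nhds (n / (T * M))) := by
  have hp0 : ∀ m, m ≤ M - 1 → 0 < p m := fun m h => (hp m h).1
  have hp1 : ∀ m, m ≤ M - 1 → 0 < 1 - p m := fun m h => sub_pos.2 (hp m h).2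
  obtain ⟨P, hPdef⟩ : ∃ P, P = ∏ j ∈ Finset.range M, p j := ⟨_, rfl⟩
  have hP : 0 < P := by
    rw [hPdef]
    exact Finset.prod_pos fun j hj => hp0 j (by have := Finset.mem_range.1 hj; omega)
  have hc : ∀ m ∈ Finset.Icc 1 (M - 2), 0 ≤ (1 - p m) * (∏ j ∈ Finset.range m, p j) := by
    intro m hm
    have hm' := Finset.mem_Icc.1 hm
    refine mul_nonneg (hp1 m (by omega)).le (Finset.prod_nonneg fun j hj => (hp0 j ?_).le)
    have := Finset.mem_range.1 hj
    omega
  obtain ⟨g, hg⟩ : ∃ g : ℝ → ℝ, ∀ x, g x = (1 - p 0) * x ^ (M - 1) +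
      (∑ m ∈ Finset.Icc 1 (M - 2),
        (1 - p m) * (∏ j ∈ Finset.range m, p j) * x ^ (M - 1 - m)) + P := ⟨_, fun _ => rfl⟩
  have hfg : ∀ θ x, f θ x = x ^ M - Real.exp (-θ * n) * g x := by
    intro θ x
    rw [hf, hg, ← hPdef, mul_add, mul_add, Finset.mul_sum]
    have : ∑ m ∈ Finset.Icc 1 (M - 2),
          (1 - p m) * Real.exp (-θ * n) * (∏ j ∈ Finset.range m, p j) * x ^ (M - 1 - m)
        = ∑ m ∈ Finset.Icc 1 (M - 2), Real.exp (-θ * n) *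
          ((1 - p m) * (∏ j ∈ Finset.range m, p j) * x ^ (M - 1 - m)) :=
      Finset.sum_congr rfl fun m _ => by ring
    rw [this]
    ring
  have h10 := hp1 0 (by omega)
  have hgP : ∀ x, 0 < x → P ≤ g x := by
    intro x hx
    rw [hg]
    have h1 : 0 ≤ (1 - p 0) * x ^ (M - 1) := by positivity
    have h2 := Finset.sum_nonneg fun m hm =>
      mul_nonneg (hc m hm) (pow_nonneg hx.le (M - 1 - m))
    linarith
  have hg1 : ∀ x, 0 < x → x ≤ 1 → g x ≤ g 1 := by
    intro x hx hx1
    rw [hg, hg]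
    gcongr with m hm
    exact hc m hm
  have hg2 : ∀ x, 1 ≤ x → g x ≤ g 1 * x ^ (M - 1) := by
    intro x hx
    rw [hg, hg, add_mul, add_mul, Finset.sum_mul]
    simp only [one_pow, mul_one]
    have h3 : P ≤ P * x ^ (M - 1) := le_mul_of_one_le_right hP.le (one_le_pow₀ hx)
    have h4 := Finset.sum_le_sum fun m hm => mul_le_mul_of_nonneg_left
      (pow_le_pow_right₀ hx (Nat.sub_le (M - 1) m)) (hc m hm)
    linarith
  have hg1pos : 0 < g 1 := lt_of_lt_of_le hP (hgP 1 one_pos)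
  have hM0 : (0 : ℝ) < M := by
    have : 0 < M := by omega
    exact_mod_cast this
  have hexp : Tendsto (fun θ : ℝ => Real.exp (-θ * n) * g 1) atTop (nhds 0) := by
    have h1 : Tendsto (fun θ : ℝ => -θ * n) atTop atBot :=
      tendsto_neg_atTop_atBot.atBot_mul_const hn
    simpa using (Real.tendsto_exp_atBot.comp h1).mul_const (g 1)
  have hev : ∀ᶠ θ : ℝ in atTop, Real.exp (-θ * n) * g 1 < 1 :=
    hexp.eventually_lt_const one_pos
  have key : ∀ᶠ θ : ℝ in atTop, ∃ L, Real.log P ≤ L ∧ L ≤ Real.log (g 1) ∧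
      -(1 / (θ * T)) * Real.log (χstar θ) = n / (T * M) - L / (T * M) * θ⁻¹ := by
    filter_upwards [hev, eventually_gt_atTop 0] with θ h1 hθ
    obtain ⟨hx, hx0, -⟩ := hχstar θ hθ
    generalize χstar θ = x at hx hx0
    rw [hfg, sub_eq_zero] at hx0
    have hgx := hgP x hx
    have hgx0 : 0 < g x := lt_of_lt_of_le hP hgx
    have hx1 : x ≤ 1 := by
      by_contra! hlt
      have h2 := hg2 x hlt.le
      have h3 : x ^ M = x * x ^ (M - 1) := by
        rw [← pow_succ']
        congr 1
        omega
      have hpp : 0 < x ^ (M - 1) := by positivity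
      have h4 : x * x ^ (M - 1) ≤ (Real.exp (-θ * n) * g 1) * x ^ (M - 1) := by
        rw [← h3, hx0, mul_assoc]
        gcongr
      have := le_of_mul_le_mul_right h4 hpp
      linarith
    refine ⟨Real.log (g x), Real.log_le_log hP hgx, Real.log_le_log hgx0 (hg1 x hx hx1), ?_⟩
    have hl := congrArg Real.log hx0
    rw [Real.log_pow, Real.log_mul (Real.exp_pos _).ne' hgx0.ne', Real.log_exp] at hl
    have : Real.log x = (-θ * n + Real.log (g x)) / M := by
      rw [eq_div_iff hM0.ne']
      linarith
    rw [this]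
    field_simp
    ring
  have hlim : ∀ c : ℝ, Tendsto (fun θ : ℝ => n / (T * M) - c / (T * M) * θ⁻¹) atTop
      (nhds (n / (T * M))) := by
    intro c
    simpa using (tendsto_inv_atTop_zero.const_mul (c / (T * M))).const_sub (n / (T * M))
  refine tendsto_of_tendsto_of_tendsto_of_le_of_le' (hlim (Real.log (g 1))) (hlim (Real.log P)) ?_ ?_
  · filter_upwards [key, eventually_gt_atTop 0] with θ ⟨L, h1, h2, h3⟩ hθ
    rw [h3]
    gcongr
  · filter_upwards [key, eventually_gt_atTop 0] with θ ⟨L, h1, h2, h3⟩ hθ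
    rw [h3]
    gcongr
end
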